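/- Let α ∈ (0,1), β ∈ (1+α, 2), and let W : (0,∞)² → ℝ be measurable with 0 ≤ W(x,y) ≤ (x/y)^α + (y/x)^α for all x,y > 0. There exists a constant C > 0 such that for all g, h ∈ X_{−α,β} the function B_W[g,h] defined by B_W[g,h](x) := (1/x²) ∫₀^x ∫_{x−y}^∞ y W(y,z) g(y) h(z) dz dy belongs to X_{1−α,β} and satisfies ‖B_W[g,h]‖_{X_{1−α,β}} ≤ C ‖g‖_{X_{−α,β}} ‖h‖_{X_{−α,β}}. -/

import Mathlib

open MeasureTheory Real Set Filter

noncomputable def weight (a b x : ℝ) : ℝ := if x ≤ 1 then x ^ a else x ^ b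

noncomputable def Xnorm (a b : ℝ) (g : ℝ → ℝ) : ℝ :=
  ∫ x in Ioi (0:ℝ), |g x| * weight a b x

def MemX (a b : ℝ) (g : ℝ → ℝ) : Prop :=
  IntegrableOn (fun x => g x * weight a b x) (Ioi 0)

noncomputable def Kern (ε : ℝ) (W : ℝ → ℝ → ℝ) (x y : ℝ) : ℝ := 2 + ε * W x y

def GoodW (α : ℝ) (W : ℝ → ℝ → ℝ) : Prop :=
  ContinuousOn (fun p : ℝ × ℝ => W p.1 p.2) (Ioi 0 ×ˢ Ioi 0) ∧
  (∀ x y : ℝ, 0 < x → 0 < y → W x y = W y x) ∧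
  (∀ l x y : ℝ, 0 < l → 0 < x → 0 < y → W (l * x) (l * y) = W x y) ∧
  (∀ x y : ℝ, 0 < x → 0 < y → 0 ≤ W x y ∧ W x y ≤ (x / y) ^ α + (y / x) ^ α)

def IsProfile (K : ℝ → ℝ → ℝ) (φ : ℝ → ℝ) : Prop :=
  LocallyIntegrableOn φ (Ioi 0) ∧
  (∀ᵐ x ∂(volume.restrict (Ioi (0:ℝ))), 0 ≤ φ x) ∧
  IntegrableOn (fun x => x * φ x) (Ioi 0) ∧
  (∀ᵐ x ∂(volume.restrict (Ioi (0:ℝ))),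
    x ^ 2 * φ x = ∫ y in Ioo 0 x, ∫ z in Ioi (x - y), y * K y z * φ y * φ z)

def IsNormalised (φ : ℝ → ℝ) : Prop := ∫ x in Ioi (0:ℝ), x * φ x = 1

noncomputable def BW (W : ℝ → ℝ → ℝ) (g h : ℝ → ℝ) (x : ℝ) : ℝ :=
  (1 / x ^ 2) * ∫ y in Ioo 0 x, ∫ z in Ioi (x - y), y * W y z * g y * h z

/-!
In the integral of `|B_W[g, h]|` against the weight, the constraint `y < x < y + z` (equivalent to
`0 < y < x`, `x - y < z`) lets Tonelli move the integration in `x` innermost. What remains is the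
pointwise estimate
`y |W(y, z)| ∫_y^{y+z} ω_{1-α,β}(x) / x² dx ≤ C ω_{-α,β}(y) ω_{-α,β}(z)`.
On `(0, ∞)` the function `ω_{1-α,β}(x) / x² = ω_{-1-α,β-2}(x)` is decreasing, so its integral is at
most `z ω_{-1-α,β-2}(y)`, which suffices for the part `(y / z)^α` of the bound on `W`. For the part
`(z / y)^α` this is too singular as `y → 0`; there the singular piece `x^{-1-α}` is integrated over
all of `(y, ∞)`, giving `y^{-α} / α`.
-/

local notation "μ₊" => volume.restrict (Ioi (0 : ℝ))

section Fubini

variable {X Y E : Type*} [MeasurableSpace X] [MeasurableSpace Y] [NormedAddCommGroup E]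
  {μ : Measure X} {ν : Measure Y} [SFinite ν] {F : X → Y → E} {D : X → ℝ}

theorem integrable_uncurry_of_integral_norm_le
    (hF : AEStronglyMeasurable (Function.uncurry F) (μ.prod ν))
    (hFi : ∀ᵐ p ∂μ, Integrable (F p) ν) (hD : Integrable D μ)
    (hFD : ∀ᵐ p ∂μ, ∫ x, ‖F p x‖ ∂ν ≤ D p) :
    Integrable (Function.uncurry F) (μ.prod ν) := by
  refine (integrable_prod_iff hF).2 ⟨hFi, hD.mono' hF.norm.integral_prod_right' ?_⟩
  filter_upwards [hFD] with p hp
  exact (norm_of_nonneg (integral_nonneg fun _ => norm_nonneg _)).trans_le hp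

theorem integral_norm_integral_le_of_integral_norm_le [NormedSpace ℝ E] [SFinite μ]
    (hF : Integrable (Function.uncurry F) (μ.prod ν)) (hD : Integrable D μ)
    (hFD : ∀ᵐ p ∂μ, ∫ x, ‖F p x‖ ∂ν ≤ D p) :
    ∫ x, ‖∫ p, F p x ∂μ‖ ∂ν ≤ ∫ p, D p ∂μ :=
  calc ∫ x, ‖∫ p, F p x ∂μ‖ ∂ν
    _ ≤ ∫ x, ∫ p, ‖F p x‖ ∂μ ∂ν :=
      integral_mono hF.integral_prod_right.norm hF.norm.integral_prod_right
        fun _ => norm_integral_le_integral_norm _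
    _ = ∫ p, ∫ x, ‖F p x‖ ∂ν ∂μ :=
      (integral_integral_swap (f := fun p x => ‖F p x‖) hF.norm).symm
    _ ≤ ∫ p, D p ∂μ := integral_mono_ae hF.norm.integral_prod_left hD hFD

end Fubini

section Weight

variable {a b c d x y : ℝ}

theorem weight_pos (hx : 0 < x) : 0 < weight a b x := by
  unfold weight
  split_ifs <;> positivity

theorem measurable_weight : Measurable (weight a b) :=
  Measurable.ite measurableSet_Iic (by fun_prop) (by fun_prop)

theorem rpow_mul_weight (hx : 0 < x) : x ^ c * weight a b x = weight (c + a) (c + b) x := by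
  unfold weight
  split_ifs <;> rw [rpow_add hx]

theorem weight_sub_two (hx : 0 < x) : weight (a - 2) (b - 2) x = weight a b x / x ^ 2 := by
  rw [sub_eq_neg_add, sub_eq_neg_add, ← rpow_mul_weight hx, rpow_neg hx.le, rpow_two,
    inv_mul_eq_div]

theorem weight_self : weight a a x = x ^ a := ite_self _

theorem weight_le_weight (hx : 0 < x) (hca : c ≤ a) (hbd : b ≤ d) :
    weight a b x ≤ weight c d x := by
  unfold weight
  split_ifs with h
  · exact rpow_le_rpow_of_exponent_ge hx h hca
  · exact rpow_le_rpow_of_exponent_le (le_of_not_ge h) hbd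

theorem rpow_le_weight (hx : 0 < x) (hac : a ≤ c) (hcb : c ≤ b) : x ^ c ≤ weight a b x :=
  weight_self.symm.trans_le (weight_le_weight hx hac hcb)

theorem antitoneOn_weight (ha : a ≤ 0) (hb : b ≤ 0) : AntitoneOn (weight a b) (Ioi 0) := by
  intro x (hx : 0 < x) y _ hxy
  unfold weight
  split_ifs with hy1 hx1 hx1
  · exact rpow_le_rpow_of_nonpos hx hxy ha
  · exact absurd (hxy.trans hy1) hx1
  · exact (rpow_le_one_of_one_le_of_nonpos (le_of_not_ge hy1) hb).trans
      (one_le_rpow_of_pos_of_le_one_of_nonpos hx hx1 ha)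
  · exact rpow_le_rpow_of_nonpos hx hxy hb

theorem weight_le_rpow_add_weight : weight a b x ≤ x ^ a + weight 0 b x := by
  unfold weight
  split_ifs with h
  · simp
  · exact le_add_of_nonneg_left (rpow_nonneg (zero_le_one.trans (le_of_not_ge h)) a)

theorem integrableOn_Ioo_weight (hy : 0 < y) : IntegrableOn (weight a b) (Ioo y x) := by
  have rpow_int (c : ℝ) : IntegrableOn (fun t : ℝ => t ^ c) (Ioo y x) :=
    (ContinuousOn.integrableOn_Icc fun t ht =>
      (continuousAt_rpow_const t c (.inl (hy.trans_le ht.1).ne')).continuousWithinAt).mono_set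
        Ioo_subset_Icc_self
  refine ((rpow_int a).add (rpow_int b)).mono' measurable_weight.aestronglyMeasurable ?_
  filter_upwards [ae_restrict_mem measurableSet_Ioo] with t ht
  have ht0 : 0 < t := hy.trans ht.1
  have := rpow_pos_of_pos ht0 a
  have := rpow_pos_of_pos ht0 b
  rw [norm_of_nonneg (weight_pos ht0).le, Pi.add_apply, weight]
  split_ifs <;> linarith

theorem integral_Ioo_weight_nonneg (hy : 0 < y) : 0 ≤ ∫ t in Ioo y x, weight a b t :=
  setIntegral_nonneg measurableSet_Ioo fun _ ht => (weight_pos (hy.trans ht.1)).le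

theorem integral_Ioo_weight_le (ha : a ≤ 0) (hb : b ≤ 0) (hy : 0 < y) (hyx : y ≤ x) :
    ∫ t in Ioo y x, weight a b t ≤ (x - y) * weight a b y :=
  calc ∫ t in Ioo y x, weight a b t
    _ ≤ ∫ _ in Ioo y x, weight a b y :=
      setIntegral_mono_on (integrableOn_Ioo_weight hy) (integrableOn_const (by simp))
        measurableSet_Ioo fun _ ht => antitoneOn_weight ha hb hy (hy.trans ht.1) ht.1.le
    _ = (x - y) * weight a b y := by simp [hyx]

theorem integral_Ioo_weight_le_rpow_add (ha : a < -1) (hb : b ≤ 0) (hy : 0 < y) (hyx : y ≤ x) :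
    ∫ t in Ioo y x, weight a b t ≤ -y ^ (a + 1) / (a + 1) + (x - y) * weight 0 b y := by
  have rpow_int : IntegrableOn (fun t : ℝ => t ^ a) (Ioi y) := integrableOn_Ioi_rpow_of_lt ha hy
  have rpow_int' := rpow_int.mono_set (Ioo_subset_Ioi_self : Ioo y x ⊆ Ioi y)
  have weight_int : IntegrableOn (weight 0 b) (Ioo y x) := integrableOn_Ioo_weight hy
  calc ∫ t in Ioo y x, weight a b t
    _ ≤ ∫ t in Ioo y x, (t ^ a + weight 0 b t) :=
      setIntegral_mono_on (integrableOn_Ioo_weight hy) (rpow_int'.add weight_int)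
        measurableSet_Ioo fun _ _ => weight_le_rpow_add_weight
    _ = (∫ t in Ioo y x, t ^ a) + ∫ t in Ioo y x, weight 0 b t :=
      integral_add rpow_int' weight_int
    _ ≤ (∫ t in Ioi y, t ^ a) + (x - y) * weight 0 b y := by
      refine add_le_add (setIntegral_mono_set rpow_int ?_ Ioo_subset_Ioi_self.eventuallyLE)
        (integral_Ioo_weight_le le_rfl hb hy hyx)
      filter_upwards [ae_restrict_mem measurableSet_Ioi] with t ht
      exact rpow_nonneg (hy.trans ht).le a
    _ = -y ^ (a + 1) / (a + 1) + (x - y) * weight 0 b y := by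
      rw [integral_Ioi_rpow_of_lt ha hy]

end Weight

section WeightedSpace

variable {a b : ℝ} {g : ℝ → ℝ}

theorem norm_mul_weight_ae_eq (g : ℝ → ℝ) :
    (fun x => ‖g x * weight a b x‖) =ᵐ[μ₊] fun x => |g x| * weight a b x := by
  filter_upwards [ae_restrict_mem measurableSet_Ioi] with x hx
  rw [norm_mul, norm_of_nonneg (weight_pos hx).le, norm_eq_abs]

theorem Xnorm_eq_integral_norm : Xnorm a b g = ∫ x, ‖g x * weight a b x‖ ∂μ₊ :=
  (integral_congr_ae (norm_mul_weight_ae_eq g)).symm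

theorem MemX.integrable_abs_mul_weight (hg : MemX a b g) :
    Integrable (fun x => |g x| * weight a b x) μ₊ :=
  hg.norm.congr (norm_mul_weight_ae_eq g)

theorem MemX.aestronglyMeasurable (hg : MemX a b g) : AEStronglyMeasurable g μ₊ := by
  have weight_inv_meas : Measurable (weight a b)⁻¹ := measurable_weight.inv
  refine ((Integrable.aestronglyMeasurable hg).mul
    weight_inv_meas.aestronglyMeasurable).congr ?_
  filter_upwards [ae_restrict_mem measurableSet_Ioi] with x hx
  exact mul_inv_cancel_right₀ (weight_pos hx).ne' (g x)

end WeightedSpace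

section WeightedIntegrand

variable {a b : ℝ} {W : ℝ → ℝ → ℝ} {g h : ℝ → ℝ}

/-- The integrand of `B_W[g, h](x) ω_{a,b}(x)` as a function of `p = (y, z)` and `x`, extended by
zero outside the domain `y < x < y + z`; the factor `1 / x²` is absorbed into the weight. -/
noncomputable def weightedIntegrand (a b : ℝ) (W : ℝ → ℝ → ℝ) (g h : ℝ → ℝ) (p : ℝ × ℝ) (x : ℝ) :
    ℝ :=
  p.1 * W p.1 p.2 * g p.1 * h p.2 * (Ioo p.1 (p.1 + p.2)).indicator (weight (a - 2) (b - 2)) x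

theorem aestronglyMeasurable_weightedIntegrand
    (hW : AEStronglyMeasurable (Function.uncurry W) (μ₊.prod μ₊))
    (hg : AEStronglyMeasurable g μ₊) (hh : AEStronglyMeasurable h μ₊) :
    AEStronglyMeasurable (Function.uncurry (weightedIntegrand a b W g h))
      ((μ₊.prod μ₊).prod μ₊) := by
  have window_meas : MeasurableSet {q : (ℝ × ℝ) × ℝ | q.1.1 < q.2 ∧ q.2 < q.1.1 + q.1.2} := by
    rw [ofPred_and]
    exact (measurableSet_lt (by fun_prop) (by fun_prop)).inter
      (measurableSet_lt (by fun_prop) (by fun_prop))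
  have weight_meas : Measurable fun q : (ℝ × ℝ) × ℝ =>
      (Ioo q.1.1 (q.1.1 + q.1.2)).indicator (weight (a - 2) (b - 2)) q.2 :=
    (measurable_weight.comp measurable_snd).indicator window_meas
  have coeff_meas : AEStronglyMeasurable (fun p : ℝ × ℝ => p.1 * W p.1 p.2 * g p.1 * h p.2)
      (μ₊.prod μ₊) :=
    ((measurable_fst.aestronglyMeasurable.mul hW).mul hg.comp_fst).mul hh.comp_snd
  exact coeff_meas.comp_fst.mul weight_meas.aestronglyMeasurable

theorem integrable_weightedIntegrand {p : ℝ × ℝ} (hp : 0 < p.1) :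
    Integrable (weightedIntegrand a b W g h p) μ₊ :=
  ((integrable_indicator_iff measurableSet_Ioo).2
    (integrableOn_Ioo_weight hp)).restrict.const_mul _

theorem integral_norm_weightedIntegrand {p : ℝ × ℝ} (hp : 0 < p.1) :
    ∫ x, ‖weightedIntegrand a b W g h p x‖ ∂μ₊ =
      |g p.1| * |h p.2| *
        (p.1 * |W p.1 p.2| * ∫ x in Ioo p.1 (p.1 + p.2), weight (a - 2) (b - 2) x) := by
  have norm_eq (x : ℝ) : ‖weightedIntegrand a b W g h p x‖ =
      p.1 * |W p.1 p.2| * |g p.1| * |h p.2| *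
        (Ioo p.1 (p.1 + p.2)).indicator (weight (a - 2) (b - 2)) x := by
    simp only [weightedIntegrand, norm_mul, norm_eq_abs, abs_of_pos hp]
    rw [abs_of_nonneg (indicator_nonneg (fun x hx => (weight_pos (hp.trans hx.1)).le) x)]
  simp_rw [norm_eq]
  rw [integral_const_mul, setIntegral_indicator measurableSet_Ioo,
    inter_eq_self_of_subset_right (Ioo_subset_Ioi_self.trans (Ioi_subset_Ioi hp.le))]
  ring

theorem BW_mul_weight {x : ℝ} (hx : 0 < x) :
    BW W g h x * weight a b x =
      ∫ y in Ioo 0 x, ∫ z in Ioi (x - y), y * W y z * g y * h z * weight (a - 2) (b - 2) x := by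
  simp_rw [integral_mul_const]
  rw [weight_sub_two hx, BW]
  ring

theorem integral_integral_weightedIntegrand {x : ℝ} (hx : 0 < x) :
    ∫ y, ∫ z, weightedIntegrand a b W g h (y, z) x ∂μ₊ ∂μ₊ = BW W g h x * weight a b x := by
  rw [BW_mul_weight hx,
    ← inter_eq_self_of_subset_right (Ioo_subset_Ioi_self : Ioo 0 x ⊆ Ioi 0),
    ← setIntegral_indicator measurableSet_Ioo]
  refine setIntegral_congr_fun measurableSet_Ioi fun y (hy : 0 < y) => ?_
  by_cases hyx : y < x
  · rw [indicator_of_mem (show y ∈ Ioo 0 x from ⟨hy, hyx⟩),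
      ← inter_eq_self_of_subset_right (Ioi_subset_Ioi (by linarith) : Ioi (x - y) ⊆ Ioi 0),
      ← setIntegral_indicator measurableSet_Ioi]
    refine setIntegral_congr_fun measurableSet_Ioi fun z _ => ?_
    simp [weightedIntegrand, indicator, hyx, sub_lt_iff_lt_add']
  · simp [weightedIntegrand, hyx]

theorem integral_weightedIntegrand_ae_eq
    (hF : Integrable (Function.uncurry (weightedIntegrand a b W g h)) ((μ₊.prod μ₊).prod μ₊)) :
    (fun x => ∫ p, weightedIntegrand a b W g h p x ∂(μ₊.prod μ₊)) =ᵐ[μ₊]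
      fun x => BW W g h x * weight a b x := by
  filter_upwards [hF.prod_left_ae, ae_restrict_mem measurableSet_Ioi] with x hFx hx
  exact (integral_prod _ hFx).trans (integral_integral_weightedIntegrand hx)

theorem memX_BW_and_Xnorm_BW_le {c d c' d' C : ℝ}
    (hW : AEStronglyMeasurable (Function.uncurry W) (μ₊.prod μ₊))
    (hWC : ∀ y z : ℝ, 0 < y → 0 < z →
      y * |W y z| * ∫ x in Ioo y (y + z), weight (a - 2) (b - 2) x ≤
        C * (weight c d y * weight c' d' z))
    (hg : MemX c d g) (hh : MemX c' d' h) :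
    MemX a b (BW W g h) ∧ Xnorm a b (BW W g h) ≤ C * Xnorm c d g * Xnorm c' d' h := by
  set F := weightedIntegrand a b W g h
  set D : ℝ × ℝ → ℝ := fun p => C * (|g p.1| * weight c d p.1 * (|h p.2| * weight c' d' p.2))
  have hpos : ∀ᵐ p ∂(μ₊.prod μ₊), 0 < p.1 ∧ 0 < p.2 := by
    rw [Measure.prod_restrict]
    exact ae_restrict_mem (measurableSet_Ioi.prod measurableSet_Ioi)
  have hD : Integrable D (μ₊.prod μ₊) :=
    (hg.integrable_abs_mul_weight.mul_prod hh.integrable_abs_mul_weight).const_mul C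
  have hFD : ∀ᵐ p ∂(μ₊.prod μ₊), ∫ x, ‖F p x‖ ∂μ₊ ≤ D p := by
    filter_upwards [hpos] with p ⟨hy, hz⟩
    calc ∫ x, ‖F p x‖ ∂μ₊
      _ ≤ |g p.1| * |h p.2| * (C * (weight c d p.1 * weight c' d' p.2)) := by
        rw [integral_norm_weightedIntegrand hy]
        exact mul_le_mul_of_nonneg_left (hWC p.1 p.2 hy hz) (by positivity)
      _ = D p := by ring
  have hF : Integrable (Function.uncurry F) ((μ₊.prod μ₊).prod μ₊) :=
    integrable_uncurry_of_integral_norm_le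
      (aestronglyMeasurable_weightedIntegrand hW hg.aestronglyMeasurable hh.aestronglyMeasurable)
      (hpos.mono fun _ hp => integrable_weightedIntegrand hp.1) hD hFD
  have hBW := integral_weightedIntegrand_ae_eq hF
  refine ⟨hF.integral_prod_right.congr hBW, ?_⟩
  calc Xnorm a b (BW W g h)
    _ = ∫ x, ‖∫ p, F p x ∂(μ₊.prod μ₊)‖ ∂μ₊ :=
      Xnorm_eq_integral_norm.trans (integral_congr_ae (hBW.fun_comp norm)).symm
    _ ≤ ∫ p, D p ∂(μ₊.prod μ₊) :=
      integral_norm_integral_le_of_integral_norm_le hF hD hFD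
    _ = C * Xnorm c d g * Xnorm c' d' h := by
      rw [integral_const_mul, integral_prod_mul (fun y => |g y| * weight c d y)
        (fun z => |h z| * weight c' d' z), mul_assoc]
      rfl

end WeightedIntegrand

section KernelEstimate

variable {α β y z : ℝ}

theorem mul_div_rpow_mul_integral_weight_le (hα : 0 ≤ α) (hαβ : 1 ≤ α + β) (hα1 : α ≤ 1)
    (hβ : β ≤ 2) (hy : 0 < y) (hz : 0 < z) :
    y * (y / z) ^ α * ∫ x in Ioo y (y + z), weight (-1 - α) (β - 2) x ≤
      weight (-α) β y * weight (-α) β z :=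
  calc y * (y / z) ^ α * ∫ x in Ioo y (y + z), weight (-1 - α) (β - 2) x
    _ ≤ y * (y / z) ^ α * ((y + z - y) * weight (-1 - α) (β - 2) y) := by
      gcongr
      exact integral_Ioo_weight_le (by linarith) (by linarith) hy (by linarith)
    _ = y ^ (1 + α) * weight (-1 - α) (β - 2) y * z ^ (1 - α) := by
      rw [div_rpow hy.le hz.le, rpow_add hy, rpow_sub hz, rpow_one, rpow_one]
      ring
    _ = weight 0 (α + β - 1) y * z ^ (1 - α) := by
      rw [rpow_mul_weight hy]
      ring_nf
    _ ≤ weight (-α) β y * weight (-α) β z := by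
      gcongr
      · exact (weight_pos hy).le
      · exact weight_le_weight hy (by linarith) (by linarith)
      · exact rpow_le_weight hz (by linarith) (by linarith)

theorem mul_div_rpow_swap_mul_integral_weight_le (hα : 0 < α) (hαβ : 1 + α ≤ β)
    (hβ : β ≤ 2) (hy : 0 < y) (hz : 0 < z) :
    y * (z / y) ^ α * ∫ x in Ioo y (y + z), weight (-1 - α) (β - 2) x ≤
      (1 + 1 / α) * (weight (-α) β y * weight (-α) β z) :=
  calc y * (z / y) ^ α * ∫ x in Ioo y (y + z), weight (-1 - α) (β - 2) x
    _ ≤ y * (z / y) ^ α *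
        (-y ^ (-1 - α + 1) / (-1 - α + 1) + (y + z - y) * weight 0 (β - 2) y) := by
      gcongr
      exact integral_Ioo_weight_le_rpow_add (by linarith) (by linarith) hy (by linarith)
    _ = 1 / α * (y ^ (1 - 2 * α) * z ^ α) +
        y ^ (1 - α) * weight 0 (β - 2) y * z ^ (1 + α) := by
      rw [div_rpow hz.le hy.le, show 1 - 2 * α = 1 - α - α by ring, rpow_sub hy (1 - α),
        rpow_sub hy 1, rpow_add hz, rpow_one, rpow_one, show -1 - α + 1 = -α by ring,
        rpow_neg hy.le]
      field_simp
      ring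
    _ = 1 / α * (y ^ (1 - 2 * α) * z ^ α) + weight (1 - α) (β - α - 1) y * z ^ (1 + α) := by
      rw [rpow_mul_weight hy]
      ring_nf
    _ ≤ 1 / α * (weight (-α) β y * weight (-α) β z) + weight (-α) β y * weight (-α) β z := by
      have := (weight_pos (a := -α) (b := β) hy).le
      gcongr
      · exact rpow_le_weight hy (by linarith) (by linarith)
      · exact rpow_le_weight hz (by linarith) (by linarith)
      · exact weight_le_weight hy (by linarith) (by linarith)
      · exact rpow_le_weight hz (by linarith) hαβ
    _ = (1 + 1 / α) * (weight (-α) β y * weight (-α) β z) := by ring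

theorem mul_kernel_mul_integral_weight_le {w : ℝ} (hα : 0 < α) (hαβ : 1 + α ≤ β) (hβ : β ≤ 2)
    (hy : 0 < y) (hz : 0 < z) (hw : w ≤ (y / z) ^ α + (z / y) ^ α) :
    y * w * ∫ x in Ioo y (y + z), weight (1 - α - 2) (β - 2) x ≤
      (2 + 1 / α) * (weight (-α) β y * weight (-α) β z) := by
  rw [show 1 - α - 2 = -1 - α by ring]
  set I := ∫ x in Ioo y (y + z), weight (-1 - α) (β - 2) x
  have hI : 0 ≤ I := integral_Ioo_weight_nonneg hy
  calc y * w * I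
    _ ≤ y * ((y / z) ^ α + (z / y) ^ α) * I := by gcongr
    _ = y * (y / z) ^ α * I + y * (z / y) ^ α * I := by ring
    _ ≤ weight (-α) β y * weight (-α) β z +
        (1 + 1 / α) * (weight (-α) β y * weight (-α) β z) :=
      add_le_add
        (mul_div_rpow_mul_integral_weight_le hα.le (by linarith) (by linarith) hβ hy hz)
        (mul_div_rpow_swap_mul_integral_weight_le hα hαβ hβ hy hz)
    _ = (2 + 1 / α) * (weight (-α) β y * weight (-α) β z) := by ring

end KernelEstimate

theorem stmt9_general {α β : ℝ} (hα : 0 < α) (hαβ : 1 + α ≤ β) (hβ : β ≤ 2) {W : ℝ → ℝ → ℝ}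
    (hW : AEStronglyMeasurable (Function.uncurry W) (μ₊.prod μ₊))
    (hWb : ∀ x y : ℝ, 0 < x → 0 < y → |W x y| ≤ (x / y) ^ α + (y / x) ^ α)
    {g h : ℝ → ℝ} (hg : MemX (-α) β g) (hh : MemX (-α) β h) :
    MemX (1 - α) β (BW W g h) ∧
      Xnorm (1 - α) β (BW W g h) ≤ (2 + 1 / α) * Xnorm (-α) β g * Xnorm (-α) β h :=
  memX_BW_and_Xnorm_BW_le hW
    (fun y z hy hz => mul_kernel_mul_integral_weight_le hα hαβ hβ hy hz (hWb y z hy hz)) hg hh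

theorem stmt9 (α β : ℝ) (hα : α ∈ Ioo (0:ℝ) 1) (hβ : β ∈ Ioo (1 + α) 2)
    (W : ℝ → ℝ → ℝ) (hWmeas : Measurable (Function.uncurry W))
    (hWb : ∀ x y : ℝ, 0 < x → 0 < y → 0 ≤ W x y ∧ W x y ≤ (x / y) ^ α + (y / x) ^ α) :
    ∃ C > (0:ℝ), ∀ g h : ℝ → ℝ, MemX (-α) β g → MemX (-α) β h →
      MemX (1 - α) β (BW W g h) ∧
      Xnorm (1 - α) β (BW W g h) ≤ C * Xnorm (-α) β g * Xnorm (-α) β h := by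
  refine ⟨2 + 1 / α, add_pos two_pos (one_div_pos.2 hα.1), fun g h => stmt9_general hα.1 hβ.1.le
    hβ.2.le hWmeas.aestronglyMeasurable fun x y hx hy => ?_⟩
  exact (abs_of_nonneg (hWb x y hx hy).1).trans_le (hWb x y hx hy).2
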